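/- (Stable sets for the convex model I_1.) For each t ∈ [0,T], the stable set S_1(t) := { z ∈ L¹(Ω) : I_1(t,z) ≤ I_1(t,ẑ) + c_D‖ẑ − z‖_{L¹} for all ẑ ∈ L¹(Ω) } admits the pointwise characterization S_1(t) = { z ∈ L¹(Ω) : |z(x)|^{β−2} z(x) ∈ [ (g(t,x) − c_D)/(α(x)β), (g(t,x) + c_D)/(α(x)β) ] for almost every x ∈ Ω }, where |z(x)|^{β−2} z(x) is interpreted as 0 when z(x) = 0. In particular, S_1(t) is convex and norm-closed in L¹(Ω), hence sequentially weakly closed. -/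

import Mathlib

open Filter Topology Set MeasureTheory
open scoped ENNReal Classical

noncomputable section

/-- Weak convergence of a sequence in a normed space: convergence against every
continuous linear functional. -/
def WeakConv {X : Type*} [NormedAddCommGroup X] [NormedSpace ℝ X]
    (u : ℕ → X) (z : X) : Prop :=
  ∀ f : X →L[ℝ] ℝ, Tendsto (fun n => f (u n)) atTop (𝓝 (f z))

/-- A set is sequentially weakly compact if every sequence in it has a subsequence
converging weakly to a point of the set. -/
def SeqWeaklyCompact {X : Type*} [NormedAddCommGroup X] [NormedSpace ℝ X]
    (S : Set X) : Prop :=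
  ∀ u : ℕ → X, (∀ n, u n ∈ S) →
    ∃ z ∈ S, ∃ φ : ℕ → ℕ, StrictMono φ ∧ WeakConv (fun n => u (φ n)) z

/-- The dissipation of the curve `z` on the interval `[s,t]`. -/
def Diss {X : Type*} (D : X → X → ℝ≥0∞) (z : ℝ → X) (s t : ℝ) : ℝ≥0∞ :=
  ⨆ (N : ℕ) (τ : ℕ → ℝ) (_ : τ 0 = s) (_ : τ N = t)
    (_ : ∀ j < N, τ j < τ (j + 1)),
    ∑ j ∈ Finset.range N, D (z (τ j)) (z (τ (j + 1)))

/-- The convex model energy functional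
`I₁(t,z) = ∫_Ω (α(x)|z(x)|^β − g(t,x) z(x)) dx + γ`, with value `+∞` when
`∫_Ω α|z|^β dx` is infinite. -/
def I1 {d : ℕ} (Ω : Set (EuclideanSpace ℝ (Fin d)))
    (αf : EuclideanSpace ℝ (Fin d) → ℝ) (β : ℝ)
    (g : ℝ → Lp ℝ ⊤ (volume.restrict Ω)) (γ : ℝ)
    (t : ℝ) (z : Lp ℝ 1 (volume.restrict Ω)) : ℝ≥0∞ :=
  if Integrable (fun x => αf x * |z x| ^ β) (volume.restrict Ω) then
    ENNReal.ofReal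
      ((∫ x, (αf x * |z x| ^ β - g t x * z x) ∂(volume.restrict Ω)) + γ)
  else ⊤

/-- A convex norm-closed set is sequentially weakly closed. -/
lemma WeakConv.mem_of_convex_of_isClosed {X : Type*} [NormedAddCommGroup X] [NormedSpace ℝ X]
    {S : Set X} (hconv : Convex ℝ S) (hclosed : IsClosed S) {u : ℕ → X} {z : X}
    (hu : ∀ n, u n ∈ S) (huz : WeakConv u z) : z ∈ S := by
  by_contra hz
  obtain ⟨f, r, hfz, hfS⟩ := geometric_hahn_banach_point_closed hconv hclosed hz
  exact absurd (ge_of_tendsto' (huz f) fun n => (hfS _ (hu n)).le) (not_le.2 hfz)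

lemma convexOn_abs_rpow {p : ℝ} (hp : 1 ≤ p) :
    ConvexOn ℝ univ fun y : ℝ => |y| ^ p := by
  have himage : (fun y : ℝ => |y|) '' univ = Ici 0 := by
    ext y
    exact ⟨fun ⟨v, _, hv⟩ => hv ▸ abs_nonneg v, fun hy => ⟨y, trivial, abs_of_nonneg hy⟩⟩
  refine ConvexOn.comp (g := fun y : ℝ => y ^ p) (f := fun y : ℝ => |y|) ?_
    (convexOn_norm convex_univ) ?_
  · rw [himage]
    exact convexOn_rpow hp
  · rw [himage]
    exact fun a ha b _ hab => Real.rpow_le_rpow ha hab (by linarith)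

/-- The tangent line inequality for `|·| ^ p`. -/
lemma abs_rpow_add_le_abs_rpow {p : ℝ} (hp : 1 < p) (y w : ℝ) :
    |y| ^ p + p * (|y| ^ (p - 2) * y) * (w - y) ≤ |w| ^ p := by
  have hderiv := hasDerivAt_abs_rpow y hp
  rcases lt_trichotomy y w with h | rfl | h
  · have := (convexOn_abs_rpow hp.le).le_slope_of_hasDerivAt trivial trivial h hderiv
    rw [slope_def_field, le_div_iff₀ (by linarith)] at this
    linarith
  · simp
  · have := (convexOn_abs_rpow hp.le).slope_le_of_hasDerivAt trivial trivial h hderiv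
    rw [slope_def_field, div_le_iff₀ (by linarith)] at this
    linarith

lemma monotone_abs_rpow_sub_two_mul {p : ℝ} (hp : 1 < p) :
    Monotone fun y : ℝ => |y| ^ (p - 2) * y := by
  intro y w hyw
  rcases hyw.eq_or_lt with rfl | hlt
  · exact le_rfl
  have h₁ := abs_rpow_add_le_abs_rpow hp y w
  have h₂ := abs_rpow_add_le_abs_rpow hp w y
  have h₃ : 0 ≤ p * (w - y) * (|w| ^ (p - 2) * w - |y| ^ (p - 2) * y) := by linarith
  have h₄ : 0 < p * (w - y) := mul_pos (by linarith) (by linarith)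
  exact sub_nonneg.1 (nonneg_of_mul_nonneg_right h₃ h₄)

/-- The interval condition on `|y| ^ (p - 2) * y` makes `y` globally stable for the energy
density `a |·| ^ p - b ·`. -/
lemma density_le_of_mem_Icc {p a b c y : ℝ} (hp : 1 < p) (ha : 0 < a)
    (hy : |y| ^ (p - 2) * y ∈ Icc ((b - c) / (a * p)) ((b + c) / (a * p))) (w : ℝ) :
    a * |y| ^ p - b * y ≤ a * |w| ^ p - b * w + c * |w - y| := by
  have hap : 0 < a * p := mul_pos ha (by linarith)
  obtain ⟨h₁, h₂⟩ := hy
  rw [div_le_iff₀ hap] at h₁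
  rw [le_div_iff₀ hap] at h₂
  have htangent := mul_le_mul_of_nonneg_left (abs_rpow_add_le_abs_rpow hp y w) ha.le
  set q := |y| ^ (p - 2) * y
  have habs : |q * (a * p) - b| ≤ c := abs_le.2 ⟨by linarith, by linarith⟩
  have hmul : |(q * (a * p) - b) * (w - y)| ≤ c * |w - y| := by
    rw [abs_mul]
    exact mul_le_mul_of_nonneg_right habs (abs_nonneg _)
  have := neg_le_of_abs_le hmul
  linarith

/-- Stability of `y` under the increments `± 1 / (n + 1)` already forces the interval
condition. -/
lemma mem_Icc_of_density_le {p a b c y : ℝ} (hp : 1 < p) (ha : 0 < a)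
    (hright : ∀ n : ℕ, a * |y| ^ p - b * y ≤
      a * |y + 1 / ((n : ℝ) + 1)| ^ p - b * (y + 1 / ((n : ℝ) + 1)) + c * |1 / ((n : ℝ) + 1)|)
    (hleft : ∀ n : ℕ, a * |y| ^ p - b * y ≤
      a * |y + -(1 / ((n : ℝ) + 1))| ^ p - b * (y + -(1 / ((n : ℝ) + 1)))
        + c * |-(1 / ((n : ℝ) + 1))|) :
    |y| ^ (p - 2) * y ∈ Icc ((b - c) / (a * p)) ((b + c) / (a * p)) := by
  have hap : 0 < a * p := mul_pos ha (by linarith)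
  have hderiv : HasDerivAt (fun w : ℝ => a * |w| ^ p - b * w)
      (a * (p * |y| ^ (p - 2) * y) - b * 1) y :=
    ((hasDerivAt_abs_rpow y hp).const_mul a).sub ((hasDerivAt_id y).const_mul b)
  have hpos (n : ℕ) : 0 < 1 / ((n : ℝ) + 1) := by positivity
  have hseq : Tendsto (fun n : ℕ => 1 / ((n : ℝ) + 1)) atTop (𝓝[>] 0) :=
    tendsto_nhdsWithin_iff.2
      ⟨tendsto_one_div_add_atTop_nhds_zero_nat, Eventually.of_forall hpos⟩
  have hseq' : Tendsto (fun n : ℕ => -(1 / ((n : ℝ) + 1))) atTop (𝓝[<] 0) :=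
    tendsto_nhdsWithin_iff.2
      ⟨by simpa using tendsto_one_div_add_atTop_nhds_zero_nat (𝕜 := ℝ).neg,
        Eventually.of_forall fun n => neg_lt_zero.2 (hpos n)⟩
  have hlower := ge_of_tendsto' (b := -c) (hderiv.tendsto_slope_zero_right.comp hseq) fun n => by
    have h := hright n
    have h₀ := hpos n
    rw [abs_of_pos h₀] at h
    simp only [Function.comp, smul_eq_mul]
    rw [inv_mul_eq_div, le_div_iff₀ h₀]
    linarith
  have hupper := le_of_tendsto' (b := c) (hderiv.tendsto_slope_zero_left.comp hseq') fun n => by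
    have h := hleft n
    have h₀ := hpos n
    rw [abs_neg, abs_of_pos h₀] at h
    simp only [Function.comp, smul_eq_mul]
    rw [inv_mul_eq_div, div_le_iff_of_neg (neg_lt_zero.2 h₀)]
    linarith
  constructor
  · rw [div_le_iff₀ hap]
    linarith
  · rw [le_div_iff₀ hap]
    linarith

section Measure

variable {E : Type*} [MeasurableSpace E] {μ : Measure E}

lemma integrable_Lp_top_mul (b : Lp ℝ ⊤ μ) (z : Lp ℝ 1 μ) :
    Integrable (fun x => b x * z x) μ :=
  (Lp.memLp b).integrable_mul (Lp.memLp z)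

lemma Lp_one_norm_eq_integral_abs (z : Lp ℝ 1 μ) : ‖z‖ = ∫ x, |z x| ∂μ := by
  simpa using L1.norm_eq_integral_norm z

/-- An `L¹` function at which the energy density is stable almost everywhere has finite energy. -/
lemma integrable_mul_abs_rpow_of_density_le {a : E → ℝ} (ha : Measurable a)
    (ha0 : ∀ᵐ x ∂μ, 0 ≤ a x) {p c : ℝ} (hp : 1 < p) (b : Lp ℝ ⊤ μ) (z : Lp ℝ 1 μ)
    (hz : ∀ᵐ x ∂μ, ∀ w : ℝ, a x * |z x| ^ p - b x * z x ≤
      a x * |w| ^ p - b x * w + c * |w - z x|) :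
    Integrable (fun x => a x * |z x| ^ p) μ := by
  have hp0 : p ≠ 0 := by linarith
  have hzm : Measurable (z : E → ℝ) := (Lp.stronglyMeasurable z).measurable
  refine (((integrable_Lp_top_mul b z).add ((L1.integrable_coeFn z).abs.const_mul c))).mono'
    (ha.mul (hzm.abs.pow_const p)).aestronglyMeasurable ?_
  filter_upwards [ha0, hz] with x hx0 hx
  have h := hx 0
  rw [Real.norm_of_nonneg (mul_nonneg hx0 (Real.rpow_nonneg (abs_nonneg _) _))]
  simp only [abs_zero, Real.zero_rpow hp0, mul_zero, zero_sub, abs_neg, sub_zero] at h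
  simp only [Pi.add_apply]
  linarith

/-- If `z` minimises the energy plus dissipation, then the density of the energy is stable
almost everywhere under any fixed increment `s`. -/
lemma ae_density_le_of_stable [IsFiniteMeasure μ] {a : E → ℝ} (ha : Measurable a)
    (ha0 : ∀ᵐ x ∂μ, 0 ≤ a x) {p c : ℝ} (hc : 0 ≤ c) (b : Lp ℝ ⊤ μ) (z : Lp ℝ 1 μ)
    (hzint : Integrable (fun x => a x * |z x| ^ p) μ)
    (hz : ∀ w : Lp ℝ 1 μ, Integrable (fun x => a x * |w x| ^ p) μ →
      ∫ x, (a x * |z x| ^ p - b x * z x) ∂μ ≤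
        ∫ x, (a x * |w x| ^ p - b x * w x) ∂μ + c * ‖w - z‖) (s : ℝ) :
    ∀ᵐ x ∂μ, a x * |z x| ^ p - b x * z x ≤
      a x * |z x + s| ^ p - b x * (z x + s) + c * |s| := by
  have hzm : Measurable (z : E → ℝ) := (Lp.stronglyMeasurable z).measurable
  have hbm : Measurable (b : E → ℝ) := (Lp.stronglyMeasurable b).measurable
  set A : Set E := {x | a x * |z x + s| ^ p - b x * (z x + s) + c * |s| <
    a x * |z x| ^ p - b x * z x} with hA
  have hAm : MeasurableSet A := measurableSet_lt
    (((ha.mul ((hzm.add_const s).abs.pow_const p)).sub (hbm.mul (hzm.add_const s))).add_const _)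
    ((ha.mul (hzm.abs.pow_const p)).sub (hbm.mul hzm))
  set v : Lp ℝ 1 μ := indicatorConstLp 1 hAm (measure_ne_top μ A) s
  set w : Lp ℝ 1 μ := z + v
  have hw : ∀ᵐ x ∂μ, w x = z x + A.indicator (fun _ => s) x := by
    filter_upwards [Lp.coeFn_add z v,
      indicatorConstLp_coeFn (p := 1) (hs := hAm) (hμs := measure_ne_top μ A) (c := s)]
      with x h₁ h₂
    rw [h₁, Pi.add_apply, h₂]
  have hbz := integrable_Lp_top_mul b z
  have hbw := integrable_Lp_top_mul b w
  have hwint : Integrable (fun x => a x * |w x| ^ p) μ := by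
    refine ((hzint.add hbz.abs).add hbw.abs).mono'
      (ha.mul ((Lp.stronglyMeasurable w).measurable.abs.pow_const p)).aestronglyMeasurable ?_
    filter_upwards [ha0, hw] with x hx0 hx
    rw [Real.norm_of_nonneg (mul_nonneg hx0 (Real.rpow_nonneg (abs_nonneg _) _))]
    simp only [Pi.add_apply]
    by_cases hxA : x ∈ A
    · rw [indicator_of_mem hxA] at hx
      have hlt := hA ▸ hxA
      simp only [mem_ofPred_eq, ← hx] at hlt
      have := mul_nonneg hc (abs_nonneg s)
      linarith [neg_abs_le (b x * z x), le_abs_self (b x * w x)]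
    · rw [indicator_of_notMem hxA, add_zero] at hx
      rw [hx]
      linarith [abs_nonneg (b x * z x)]
  have hstable := hz w hwint
  have hnorm : ‖w - z‖ = ∫ x, |A.indicator (fun _ => s) x| ∂μ := by
    rw [add_sub_cancel_left, Lp_one_norm_eq_integral_abs]
    refine integral_congr_ae ?_
    filter_upwards [indicatorConstLp_coeFn (p := 1) (hs := hAm) (hμs := measure_ne_top μ A)
      (c := s)] with x hx
    rw [hx]
  have hFz : Integrable (fun x => a x * |z x| ^ p - b x * z x) μ := hzint.sub hbz
  have hFw : Integrable (fun x => a x * |w x| ^ p - b x * w x) μ := hwint.sub hbw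
  have hind : Integrable (fun x => c * |A.indicator (fun _ => s) x|) μ :=
    (((integrable_const s).indicator hAm).abs).const_mul c
  set G : E → ℝ := fun x => a x * |z x| ^ p - b x * z x - (a x * |w x| ^ p - b x * w x) -
    c * |A.indicator (fun _ => s) x| with hG
  have hGint : Integrable G μ := (hFz.sub hFw).sub hind
  have hGle : ∫ x, G x ∂μ ≤ 0 := by
    have : ∫ x, G x ∂μ = ∫ x, (a x * |z x| ^ p - b x * z x) ∂μ -
        ∫ x, (a x * |w x| ^ p - b x * w x) ∂μ - c * ‖w - z‖ := by
      rw [hnorm, ← integral_const_mul, ← integral_sub hFz hFw,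
        ← integral_sub]
      exacts [hFz.sub hFw, hind]
    linarith
  have hGnonneg : 0 ≤ᵐ[μ] G := by
    filter_upwards [hw] with x hx
    simp only [hG, Pi.zero_apply, hx]
    by_cases hxA : x ∈ A
    · have hlt := hA ▸ hxA
      simp only [mem_ofPred_eq] at hlt
      simp only [indicator_of_mem hxA]
      linarith
    · simp [indicator_of_notMem hxA]
  have hGzero := (integral_eq_zero_iff_of_nonneg_ae hGnonneg hGint).1
    (hGle.antisymm (integral_nonneg_of_ae hGnonneg))
  filter_upwards [hw, hGzero] with x hx hx0
  by_contra hnot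
  have hxA : x ∈ A := not_le.1 hnot
  simp only [hG, Pi.zero_apply, hx, indicator_of_mem hxA] at hx0
  linarith

/-- The pointwise interval condition defines a convex subset of `L¹`. -/
lemma convex_setOf_ae_mem_Icc {p : ℝ} (hp : 1 < p) (l r : E → ℝ) :
    Convex ℝ {z : Lp ℝ 1 μ | ∀ᵐ x ∂μ, |z x| ^ (p - 2) * z x ∈ Icc (l x) (r x)} := by
  intro z hz w hw θ η hθ hη hsum
  filter_upwards [hz, hw, Lp.coeFn_add (θ • z) (η • w), Lp.coeFn_smul θ z, Lp.coeFn_smul η w]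
    with x h₁ h₂ h₃ h₄ h₅
  have hconv : Convex ℝ ((fun y : ℝ => |y| ^ (p - 2) * y) ⁻¹' Icc (l x) (r x)) :=
    (ordConnected_Icc.preimage_mono (monotone_abs_rpow_sub_two_mul hp)).convex
  rw [h₃, Pi.add_apply, h₄, h₅]
  exact hconv h₁ h₂ hθ hη hsum

/-- Pointwise stability of the energy density defines a closed subset of `L¹`. -/
lemma isClosed_setOf_ae_density_le {p : ℝ} (hp : 0 ≤ p) (a b : E → ℝ) (c : ℝ) :
    IsClosed {z : Lp ℝ 1 μ | ∀ᵐ x ∂μ, ∀ w : ℝ, a x * |z x| ^ p - b x * z x ≤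
      a x * |w| ^ p - b x * w + c * |w - z x|} := by
  refine IsSeqClosed.isClosed fun u z hu huz => ?_
  obtain ⟨φ, -, hφ⟩ := (tendstoInMeasure_of_tendsto_Lp huz).exists_seq_tendsto_ae
  filter_upwards [hφ, ae_all_iff.2 hu] with x hx hux w
  have hleft : Continuous fun y : ℝ => a x * |y| ^ p - b x * y :=
    ((continuous_abs.rpow_const fun _ => Or.inr hp).const_mul _).sub
      (continuous_const.mul continuous_id)
  have hright : Continuous fun y : ℝ => a x * |w| ^ p - b x * w + c * |w - y| := by fun_prop
  exact le_of_tendsto_of_tendsto' ((hleft.tendsto _).comp hx) ((hright.tendsto _).comp hx)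
    fun n => hux (φ n) w

end Measure

/-- The stable sets of the convex model `I₁` admit the pointwise characterization
`S₁(t) = { z : |z(x)|^(β−2) z(x) ∈ [(g(t,x)−c_D)/(α(x)β), (g(t,x)+c_D)/(α(x)β)] a.e. }`;
in particular they are convex, norm-closed and hence sequentially weakly closed. -/
theorem I1_stable_set_characterization
    {d : ℕ} (Ω : Set (EuclideanSpace ℝ (Fin d)))
    (hΩmeas : MeasurableSet Ω) (hΩbdd : Bornology.IsBounded Ω)
    (hΩpos : 0 < volume Ω)
    (T cD : ℝ) (hT : 0 < T) (hcD : 0 < cD)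
    (αf : EuclideanSpace ℝ (Fin d) → ℝ) (hαmeas : Measurable αf)
    (α0 : ℝ) (hα0 : 0 < α0) (hαlb : ∀ x ∈ Ω, α0 ≤ αf x)
    (β : ℝ) (hβ : 1 < β)
    (g : ℝ → Lp ℝ ⊤ (volume.restrict Ω))
    (hg : ContDiffOn ℝ 1 g (Icc (0:ℝ) T))
    (γ : ℝ)
    -- `γ` is chosen so that `I₁` is nonnegative:
    (hnonneg : ∀ t ∈ Icc (0:ℝ) T, ∀ z : Lp ℝ 1 (volume.restrict Ω),
      Integrable (fun x => αf x * |z x| ^ β) (volume.restrict Ω) →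
      0 ≤ (∫ x, (αf x * |z x| ^ β - g t x * z x) ∂(volume.restrict Ω)) + γ)
    (t : ℝ) (ht : t ∈ Icc (0:ℝ) T) :
    {z : Lp ℝ 1 (volume.restrict Ω) |
        ∀ w : Lp ℝ 1 (volume.restrict Ω),
          I1 Ω αf β g γ t z ≤ I1 Ω αf β g γ t w + ENNReal.ofReal (cD * ‖w - z‖)}
      = {z : Lp ℝ 1 (volume.restrict Ω) |
        ∀ᵐ x ∂(volume.restrict Ω),
          |z x| ^ (β - 2) * z x ∈
            Icc ((g t x - cD) / (αf x * β)) ((g t x + cD) / (αf x * β))} ∧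
    Convex ℝ {z : Lp ℝ 1 (volume.restrict Ω) |
        ∀ w : Lp ℝ 1 (volume.restrict Ω),
          I1 Ω αf β g γ t z ≤ I1 Ω αf β g γ t w + ENNReal.ofReal (cD * ‖w - z‖)} ∧
    IsClosed {z : Lp ℝ 1 (volume.restrict Ω) |
        ∀ w : Lp ℝ 1 (volume.restrict Ω),
          I1 Ω αf β g γ t z ≤ I1 Ω αf β g γ t w + ENNReal.ofReal (cD * ‖w - z‖)} ∧
    (∀ (u : ℕ → Lp ℝ 1 (volume.restrict Ω)) (z : Lp ℝ 1 (volume.restrict Ω)),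
      (∀ n, ∀ w : Lp ℝ 1 (volume.restrict Ω),
        I1 Ω αf β g γ t (u n) ≤ I1 Ω αf β g γ t w + ENNReal.ofReal (cD * ‖w - u n‖)) →
      WeakConv u z →
      ∀ w : Lp ℝ 1 (volume.restrict Ω),
        I1 Ω αf β g γ t z ≤ I1 Ω αf β g γ t w + ENNReal.ofReal (cD * ‖w - z‖)) := by
  have : IsFiniteMeasure (volume.restrict Ω) := ⟨by simpa using hΩbdd.measure_lt_top⟩
  have hβ0 : β ≠ 0 := by linarith
  have hαpos : ∀ᵐ x ∂(volume.restrict Ω), 0 < αf x :=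
    (ae_restrict_mem hΩmeas).mono fun x hx => hα0.trans_le (hαlb x hx)
  have hαnonneg : ∀ᵐ x ∂(volume.restrict Ω), 0 ≤ αf x := hαpos.mono fun x hx => hx.le
  have hstable_density (z : Lp ℝ 1 (volume.restrict Ω))
      (hz : ∀ w : Lp ℝ 1 (volume.restrict Ω),
        I1 Ω αf β g γ t z ≤ I1 Ω αf β g γ t w + ENNReal.ofReal (cD * ‖w - z‖)) :
      ∀ᵐ x ∂(volume.restrict Ω), |z x| ^ (β - 2) * z x ∈
        Icc ((g t x - cD) / (αf x * β)) ((g t x + cD) / (αf x * β)) := by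
    have hzero : Integrable (fun x => αf x * |(0 : Lp ℝ 1 (volume.restrict Ω)) x| ^ β)
        (volume.restrict Ω) := by
      refine (integrable_zero _ ℝ (volume.restrict Ω)).congr ?_
      filter_upwards [Lp.coeFn_zero ℝ 1 (volume.restrict Ω)] with x hx
      rw [hx]
      simp [Real.zero_rpow hβ0]
    have hzint : Integrable (fun x => αf x * |z x| ^ β) (volume.restrict Ω) := by
      by_contra hnot
      have h := hz 0
      rw [I1, if_neg hnot, I1, if_pos hzero] at h
      exact absurd h (not_le.2 (ENNReal.add_lt_top.2
        ⟨ENNReal.ofReal_lt_top, ENNReal.ofReal_lt_top⟩))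
    have hreal (w : Lp ℝ 1 (volume.restrict Ω))
        (hwint : Integrable (fun x => αf x * |w x| ^ β) (volume.restrict Ω)) :
        ∫ x, (αf x * |z x| ^ β - g t x * z x) ∂(volume.restrict Ω) ≤
          ∫ x, (αf x * |w x| ^ β - g t x * w x) ∂(volume.restrict Ω) + cD * ‖w - z‖ := by
      have h := hz w
      have hwnonneg := hnonneg t ht w hwint
      have hdiss : 0 ≤ cD * ‖w - z‖ := by positivity
      rw [I1, if_pos hzint, I1, if_pos hwint, ← ENNReal.ofReal_add hwnonneg hdiss,
        ENNReal.ofReal_le_ofReal_iff (add_nonneg hwnonneg hdiss)] at h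
      linarith
    have hincr := ae_density_le_of_stable hαmeas hαnonneg hcD.le (g t) z hzint hreal
    filter_upwards [hαpos, ae_all_iff.2 fun n : ℕ => hincr (1 / ((n : ℝ) + 1)),
      ae_all_iff.2 fun n : ℕ => hincr (-(1 / ((n : ℝ) + 1)))] with x hx hright hleft
    exact mem_Icc_of_density_le hβ hx hright hleft
  have hdensity_iff (z : Lp ℝ 1 (volume.restrict Ω)) :
      (∀ᵐ x ∂(volume.restrict Ω), |z x| ^ (β - 2) * z x ∈
        Icc ((g t x - cD) / (αf x * β)) ((g t x + cD) / (αf x * β))) ↔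
      ∀ᵐ x ∂(volume.restrict Ω), ∀ w : ℝ, αf x * |z x| ^ β - g t x * z x ≤
        αf x * |w| ^ β - g t x * w + cD * |w - z x| := by
    constructor
    · intro hz
      filter_upwards [hαpos, hz] with x hx hzx
      exact density_le_of_mem_Icc hβ hx hzx
    · intro hz
      filter_upwards [hαpos, hz] with x hx hzx
      refine mem_Icc_of_density_le (c := cD) hβ hx (fun n => ?_) fun n => ?_
      · simpa only [add_sub_cancel_left] using hzx (z x + 1 / ((n : ℝ) + 1))
      · simpa only [add_sub_cancel_left] using hzx (z x + -(1 / ((n : ℝ) + 1)))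
  have hcharacterization : {z : Lp ℝ 1 (volume.restrict Ω) | ∀ w : Lp ℝ 1 (volume.restrict Ω),
        I1 Ω αf β g γ t z ≤ I1 Ω αf β g γ t w + ENNReal.ofReal (cD * ‖w - z‖)}
      = {z : Lp ℝ 1 (volume.restrict Ω) | ∀ᵐ x ∂(volume.restrict Ω), |z x| ^ (β - 2) * z x ∈
            Icc ((g t x - cD) / (αf x * β)) ((g t x + cD) / (αf x * β))} := by
    refine Subset.antisymm hstable_density fun z hz w => ?_
    have hdensity := (hdensity_iff z).1 hz
    have hzint := integrable_mul_abs_rpow_of_density_le hαmeas hαnonneg hβ (g t) z hdensity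
    by_cases hwint : Integrable (fun x => αf x * |w x| ^ β) (volume.restrict Ω)
    · rw [I1, if_pos hzint, I1, if_pos hwint]
      refine le_trans (ENNReal.ofReal_le_ofReal ?_) ENNReal.ofReal_add_le
      have hFz := hzint.sub (integrable_Lp_top_mul (g t) z)
      have hFw := hwint.sub (integrable_Lp_top_mul (g t) w)
      have hdiss : Integrable (fun x => cD * |(w - z) x|) (volume.restrict Ω) :=
        (L1.integrable_coeFn (w - z)).abs.const_mul cD
      have hle : ∫ x, (αf x * |z x| ^ β - g t x * z x) ∂(volume.restrict Ω) ≤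
          ∫ x, ((αf x * |w x| ^ β - g t x * w x) + cD * |(w - z) x|) ∂(volume.restrict Ω) := by
        refine integral_mono_ae hFz (hFw.add hdiss) ?_
        filter_upwards [hdensity, Lp.coeFn_sub w z] with x hx hsub
        rw [hsub]
        exact hx (w x)
      have hadd : ∫ x, ((αf x * |w x| ^ β - g t x * w x) + cD * |(w - z) x|) ∂(volume.restrict Ω) =
          ∫ x, (αf x * |w x| ^ β - g t x * w x) ∂(volume.restrict Ω) +
            ∫ x, cD * |(w - z) x| ∂(volume.restrict Ω) :=
        integral_add hFw hdiss
      rw [hadd, integral_const_mul, ← Lp_one_norm_eq_integral_abs] at hle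
      linarith
    · rw [I1, I1, if_neg hwint]
      simp
  have hconvex := convex_setOf_ae_mem_Icc (μ := volume.restrict Ω) hβ
    (fun x => (g t x - cD) / (αf x * β)) (fun x => (g t x + cD) / (αf x * β))
  rw [← hcharacterization] at hconvex
  have hclosed := isClosed_setOf_ae_density_le (μ := volume.restrict Ω) (p := β)
    (by linarith) αf (g t) cD
  simp only [← hdensity_iff] at hclosed
  rw [← hcharacterization] at hclosed
  exact ⟨hcharacterization, hconvex, hclosed, fun u z hu huz =>
    huz.mem_of_convex_of_isClosed hconvex hclosed hu⟩
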